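/- Reflection symmetrization of the p-modulus: let m ≥ 1, let N₀* be the closed dihedral sector {[ρ,θ,x'] : 0 ≤ θ ≤ π/m} in cylindrical coordinates on ℝⁿ, let Γ₀* be a family of curves contained in N₀*, and let Γ* be the family of curves γ* = ⋃_{k=0}^{2m-1} γ_k*, where γ_k* is obtained from γ₀* ∈ Γ₀* by successive reflections in the hyperplanes θ = πk/m. Then M_p(Γ*) = (2m)^{1-p} M_p(Γ₀*) for every p > 1. -/

import Mathlib

open MeasureTheory ENNReal Real

/-- A Borel density `ρ` is admissible for the curve family `Γ` if the line integral of `ρ`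
(against one-dimensional Hausdorff measure) along every curve of `Γ` is at least `1`. -/
def Admissible (n : ℕ) (Γ : Set (Set (EuclideanSpace ℝ (Fin n))))
    (ρ : EuclideanSpace ℝ (Fin n) → ℝ≥0∞) : Prop :=
  Measurable ρ ∧ ∀ γ ∈ Γ, 1 ≤ ∫⁻ x in γ, ρ x ∂(μH[1])

/-- The `p`-modulus of a family of curves in `ℝⁿ`. -/
noncomputable def pMod (n : ℕ) (p : ℝ) (Γ : Set (Set (EuclideanSpace ℝ (Fin n)))) : ℝ≥0∞ :=
  ⨅ ρ ∈ {ρ | Admissible n Γ ρ}, ∫⁻ x, ρ x ^ p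

/-- The `k`-th coordinate (indexed by a natural number) of a point of `ℝⁿ`. -/
def coordN (n : ℕ) (x : EuclideanSpace ℝ (Fin n)) (k : ℕ) : ℝ :=
  ∑ j : Fin n, if j.val = k then x j else 0

/-- Rotation by the angle `β` in the `(x₁,x₂)`-plane (cylindrical coordinates
`[ρ,θ,x'] ↦ [ρ,θ+β,x']`), identity on the remaining coordinates. -/
noncomputable def planeRot (n : ℕ) (β : ℝ) (x : EuclideanSpace ℝ (Fin n)) :
    EuclideanSpace ℝ (Fin n) :=
  (EuclideanSpace.equiv (Fin n) ℝ).symm (fun i =>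
    if i.val = 0 then Real.cos β * coordN n x 0 - Real.sin β * coordN n x 1
    else if i.val = 1 then Real.sin β * coordN n x 0 + Real.cos β * coordN n x 1
    else x i)

/-- Reflection in the hyperplane containing the half-hyperplane `θ = α`
(in cylindrical coordinates `x₁ = ρ cos θ, x₂ = ρ sin θ`). -/
noncomputable def planeRefl (n : ℕ) (α : ℝ) (x : EuclideanSpace ℝ (Fin n)) :
    EuclideanSpace ℝ (Fin n) :=
  (EuclideanSpace.equiv (Fin n) ℝ).symm (fun i =>
    if i.val = 0 then Real.cos (2 * α) * coordN n x 0 + Real.sin (2 * α) * coordN n x 1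
    else if i.val = 1 then Real.sin (2 * α) * coordN n x 0 - Real.cos (2 * α) * coordN n x 1
    else x i)

/-- The closed dihedral sector `{[ρ,θ,x'] : θ₁ ≤ θ ≤ θ₂}` in cylindrical coordinates. -/
def sector (n : ℕ) (θ₁ θ₂ : ℝ) : Set (EuclideanSpace ℝ (Fin n)) :=
  {x | ∃ ρ θ : ℝ, 0 ≤ ρ ∧ θ₁ ≤ θ ∧ θ ≤ θ₂ ∧
    coordN n x 0 = ρ * Real.cos θ ∧ coordN n x 1 = ρ * Real.sin θ}

/-- The successive reflections `γ₀* = γ`, `γ_k* = φ_k(γ_{k-1}*)`, where `φ_k` is the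
reflection in the hyperplane containing `θ = πk/m`. -/
noncomputable def reflImages (n m : ℕ) (γ : Set (EuclideanSpace ℝ (Fin n))) :
    ℕ → Set (EuclideanSpace ℝ (Fin n))
  | 0 => γ
  | k + 1 => planeRefl n (Real.pi * (k + 1) / m) '' reflImages n m γ k

/-!
Let `S k = φ_k ∘ ⋯ ∘ φ_1`, an isometry that carries `N₀*` onto the `k`-th sector.

* If `ρ` is admissible for `Γ*`, then `∑ k, ρ ∘ S k`, restricted to `N₀*`, is admissible for `Γ₀*`.
  By convexity of `t ↦ t ^ p`, this multiplies the `p`-energy by at most `(2m) ^ (p - 1)`.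
* If `ρ` is admissible for `Γ₀*`, then the density equal to `(2m)⁻¹ ρ ∘ (S k)⁻¹` on the `k`-th
  sector is admissible for `Γ*`. Its energy is at most `2m (2m) ^ (-p)` times that of `ρ`, because
  the sectors overlap only in hyperplanes, which are null sets.

Overlaps of the curves `γ_k*` do no harm: the first part uses only subadditivity of the line
integral in the curve, and in the second part densities are summed where sectors meet.
-/

theorem sum_rpow_of_pairwise_eq_zero {ι : Type*} {s : Finset ι} {f : ι → ℝ≥0∞} {p : ℝ}
    (hp : 0 < p) (hf : (s : Set ι).Pairwise fun i j => f i = 0 ∨ f j = 0) :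
    (∑ i ∈ s, f i) ^ p = ∑ i ∈ s, f i ^ p := by
  by_cases h : ∃ i ∈ s, f i ≠ 0
  · obtain ⟨i, hi, hfi⟩ := h
    have hzero : ∀ j ∈ s, j ≠ i → f j = 0 := fun j hj hji =>
      (hf hi hj hji.symm).resolve_left hfi
    rw [Finset.sum_eq_single_of_mem i hi hzero, Finset.sum_eq_single_of_mem i hi fun j hj hji => by
      rw [hzero j hj hji, zero_rpow_of_pos hp]]
  · push Not at h
    rw [Finset.sum_eq_zero h, zero_rpow_of_pos hp, Finset.sum_eq_zero fun i hi => by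
      rw [h i hi, zero_rpow_of_pos hp]]

theorem lintegral_biUnion_finset_le {α ι : Type*} [MeasurableSpace α] (μ : Measure α)
    (s : Finset ι) (t : ι → Set α) (f : α → ℝ≥0∞) :
    ∫⁻ x in ⋃ i ∈ s, t i, f x ∂μ ≤ ∑ i ∈ s, ∫⁻ x in t i, f x ∂μ :=
  calc ∫⁻ x in ⋃ i ∈ s, t i, f x ∂μ
      ≤ ∫⁻ x, f x ∂Measure.sum fun i : s => μ.restrict (t i) :=
        lintegral_mono' (Measure.restrict_biUnion_le (T := (s : Set ι)) s.countable_toSet) le_rfl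
    _ = ∑ i ∈ s, ∫⁻ x in t i, f x ∂μ := by
        rw [lintegral_sum_measure, Finset.tsum_subtype s fun i => ∫⁻ x in t i, f x ∂μ]

section Folding

variable {α ι : Type*} [MeasurableSpace α]

/-- The density on `N` that collects a density `ρ` from all the images `T i '' N`. It turns
densities admissible for the symmetrized curves into densities admissible for the original ones. -/
noncomputable def foldDensity (s : Finset ι) (T : ι → α ≃ᵐ α) (N : Set α) (ρ : α → ℝ≥0∞) :
    α → ℝ≥0∞ :=
  N.indicator fun x => ∑ i ∈ s, ρ (T i x)

/-- The density on `⋃ i ∈ s, T i '' N` that is an equal share `1 / #s` of the transported copy of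
`ρ` on every `T i '' N`. It turns densities admissible for the original curves into densities
admissible for the symmetrized ones. -/
noncomputable def unfoldDensity (s : Finset ι) (T : ι → α ≃ᵐ α) (N : Set α) (ρ : α → ℝ≥0∞) :
    α → ℝ≥0∞ :=
  fun x => (s.card : ℝ≥0∞)⁻¹ * ∑ i ∈ s, N.indicator ρ ((T i).symm x)

variable {μ : Measure α} {s : Finset ι} {T : ι → α ≃ᵐ α} {N γ : Set α} {ρ : α → ℝ≥0∞} {p : ℝ}

theorem measurable_foldDensity (hN : MeasurableSet N) (hρ : Measurable ρ) :
    Measurable (foldDensity s T N ρ) :=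
  (Finset.measurable_fun_sum _ fun i _ => hρ.comp (T i).measurable).indicator hN

theorem measurable_unfoldDensity (hN : MeasurableSet N) (hρ : Measurable ρ) :
    Measurable (unfoldDensity s T N ρ) :=
  (Finset.measurable_fun_sum _ fun i _ =>
    (hρ.indicator hN).comp (T i).symm.measurable).const_mul _

theorem lintegral_biUnion_image_le_foldDensity (hT : ∀ i, MeasurePreserving (T i) μ μ)
    (hN : MeasurableSet N) (hγ : γ ⊆ N) (hρ : Measurable ρ) :
    ∫⁻ x in ⋃ i ∈ s, T i '' γ, ρ x ∂μ ≤ ∫⁻ x in γ, foldDensity s T N ρ x ∂μ :=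
  calc ∫⁻ x in ⋃ i ∈ s, T i '' γ, ρ x ∂μ
      ≤ ∑ i ∈ s, ∫⁻ x in T i '' γ, ρ x ∂μ := lintegral_biUnion_finset_le μ s _ ρ
    _ = ∑ i ∈ s, ∫⁻ x in γ, ρ (T i x) ∂μ := Finset.sum_congr rfl fun i _ =>
        ((hT i).setLIntegral_comp_emb (T i).measurableEmbedding ρ γ).symm
    _ = ∫⁻ x in γ, ∑ i ∈ s, ρ (T i x) ∂μ :=
        (lintegral_finsetSum _ fun i _ => hρ.comp (T i).measurable).symm
    _ = ∫⁻ x in γ, foldDensity s T N ρ x ∂μ := by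
        rw [foldDensity, setLIntegral_indicator hN, Set.inter_eq_right.2 hγ]

theorem lintegral_foldDensity_rpow_le (hp : 1 ≤ p) (hT : ∀ i, MeasurePreserving (T i) μ μ)
    (hN : MeasurableSet N)
    (hdisj : (s : Set ι).Pairwise (Function.onFun (AEDisjoint μ) fun i => T i '' N))
    (hρ : Measurable ρ) :
    ∫⁻ x, foldDensity s T N ρ x ^ p ∂μ ≤ (s.card : ℝ≥0∞) ^ (p - 1) * ∫⁻ x, ρ x ^ p ∂μ :=
  calc ∫⁻ x, foldDensity s T N ρ x ^ p ∂μ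
      = ∫⁻ x in N, (∑ i ∈ s, ρ (T i x)) ^ p ∂μ := by
        rw [← lintegral_indicator hN]
        exact lintegral_congr fun x => congrFun
          (Set.indicator_comp_of_zero (g := (· ^ p)) (zero_rpow_of_pos (by linarith))).symm x
    _ ≤ ∫⁻ x in N, (s.card : ℝ≥0∞) ^ (p - 1) * ∑ i ∈ s, ρ (T i x) ^ p ∂μ :=
        lintegral_mono fun x => rpow_sum_le_const_mul_sum_rpow s (fun i => ρ (T i x)) hp
    _ = (s.card : ℝ≥0∞) ^ (p - 1) * ∑ i ∈ s, ∫⁻ x in N, ρ (T i x) ^ p ∂μ := by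
        have hmeas (i : ι) : Measurable fun x => ρ (T i x) ^ p :=
          (hρ.comp (T i).measurable).pow_const p
        rw [lintegral_const_mul _ (Finset.measurable_fun_sum _ fun i _ => hmeas i),
          lintegral_finsetSum _ fun i _ => hmeas i]
    _ = (s.card : ℝ≥0∞) ^ (p - 1) * ∑ i ∈ s, ∫⁻ x in T i '' N, ρ x ^ p ∂μ := by
        congr! 2 with i
        exact (hT i).setLIntegral_comp_emb (T i).measurableEmbedding (fun x => ρ x ^ p) N
    _ = (s.card : ℝ≥0∞) ^ (p - 1) * ∫⁻ x in ⋃ i ∈ s, T i '' N, ρ x ^ p ∂μ := by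
        rw [lintegral_biUnion_finset₀ hdisj fun i _ =>
          ((T i).measurableSet_image.2 hN).nullMeasurableSet]
    _ ≤ (s.card : ℝ≥0∞) ^ (p - 1) * ∫⁻ x, ρ x ^ p ∂μ := by
        gcongr _ * ?_
        exact setLIntegral_le_lintegral _ _

theorem lintegral_le_biUnion_image_unfoldDensity (hs : s.Nonempty)
    (hT : ∀ i, MeasurePreserving (T i) μ μ) (hN : MeasurableSet N) (hγ : γ ⊆ N)
    (hρ : Measurable ρ) :
    ∫⁻ x in γ, ρ x ∂μ ≤ ∫⁻ x in ⋃ i ∈ s, T i '' γ, unfoldDensity s T N ρ x ∂μ := by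
  have hmeas (i : ι) : Measurable fun x => N.indicator ρ ((T i).symm x) :=
    (hρ.indicator hN).comp (T i).symm.measurable
  have hcopy (i : ι) (hi : i ∈ s) : ∫⁻ x in γ, ρ x ∂μ ≤
      ∫⁻ x in ⋃ i ∈ s, T i '' γ, N.indicator ρ ((T i).symm x) ∂μ :=
    calc ∫⁻ x in γ, ρ x ∂μ
        = ∫⁻ x in γ, N.indicator ρ ((T i).symm (T i x)) ∂μ := by
          simp only [MeasurableEquiv.symm_apply_apply]
          rw [setLIntegral_indicator hN, Set.inter_eq_right.2 hγ]
      _ = ∫⁻ x in T i '' γ, N.indicator ρ ((T i).symm x) ∂μ :=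
          (hT i).setLIntegral_comp_emb (T i).measurableEmbedding
            (fun x => N.indicator ρ ((T i).symm x)) γ
      _ ≤ ∫⁻ x in ⋃ i ∈ s, T i '' γ, N.indicator ρ ((T i).symm x) ∂μ :=
          lintegral_mono_set (Set.subset_biUnion_of_mem (u := fun i => T i '' γ) hi)
  calc ∫⁻ x in γ, ρ x ∂μ
      = (s.card : ℝ≥0∞)⁻¹ * ∑ _i ∈ s, ∫⁻ x in γ, ρ x ∂μ := by
        rw [Finset.sum_const, nsmul_eq_mul, ← mul_assoc, ENNReal.inv_mul_cancel
          (by simpa using hs.ne_empty) (natCast_ne_top _), one_mul]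
    _ ≤ (s.card : ℝ≥0∞)⁻¹ *
          ∑ i ∈ s, ∫⁻ x in ⋃ i ∈ s, T i '' γ, N.indicator ρ ((T i).symm x) ∂μ := by
        gcongr _ * ?_
        exact Finset.sum_le_sum hcopy
    _ = ∫⁻ x in ⋃ i ∈ s, T i '' γ, unfoldDensity s T N ρ x ∂μ := by
        simp only [unfoldDensity]
        rw [lintegral_const_mul _ (Finset.measurable_fun_sum _ fun i _ => hmeas i),
          lintegral_finsetSum _ fun i _ => hmeas i]

theorem unfoldDensity_rpow_ae_eq (hp : 0 < p)
    (hdisj : (s : Set ι).Pairwise (Function.onFun (AEDisjoint μ) fun i => T i '' N)) :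
    ∀ᵐ x ∂μ, unfoldDensity s T N ρ x ^ p =
      (s.card : ℝ≥0∞) ^ (-p) * ∑ i ∈ s, N.indicator ρ ((T i).symm x) ^ p := by
  have hae : ∀ᵐ x ∂μ, ∀ i ∈ (s : Set ι), ∀ j ∈ (s : Set ι), i ≠ j →
      ¬(x ∈ T i '' N ∧ x ∈ T j '' N) := by
    simp only [ae_ball_iff s.countable_toSet]
    intro i hi j hj
    refine Filter.eventually_imp_distrib_left.2 fun hij => ?_
    exact measure_eq_zero_iff_ae_notMem.1 (hdisj hi hj hij)
  filter_upwards [hae] with x hx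
  have hpair : (s : Set ι).Pairwise fun i j =>
      N.indicator ρ ((T i).symm x) = 0 ∨ N.indicator ρ ((T j).symm x) = 0 := by
    intro i hi j hj hij
    by_contra! h
    have hmem (k : ι) (hk : N.indicator ρ ((T k).symm x) ≠ 0) : x ∈ T k '' N :=
      ⟨(T k).symm x, Set.mem_of_indicator_ne_zero hk, (T k).apply_symm_apply x⟩
    exact hx i hi j hj hij ⟨hmem i h.1, hmem j h.2⟩
  rw [unfoldDensity, mul_rpow_of_nonneg _ _ hp.le, sum_rpow_of_pairwise_eq_zero hp hpair,
    ENNReal.inv_rpow, ← ENNReal.rpow_neg]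

theorem lintegral_unfoldDensity_rpow_le (hp : 0 < p) (hs : s.Nonempty)
    (hT : ∀ i, MeasurePreserving (T i) μ μ) (hN : MeasurableSet N)
    (hdisj : (s : Set ι).Pairwise (Function.onFun (AEDisjoint μ) fun i => T i '' N))
    (hρ : Measurable ρ) :
    ∫⁻ x, unfoldDensity s T N ρ x ^ p ∂μ ≤ (s.card : ℝ≥0∞) ^ (1 - p) * ∫⁻ x, ρ x ^ p ∂μ := by
  have hmeas (i : ι) : Measurable fun x => N.indicator ρ ((T i).symm x) ^ p :=
    ((hρ.indicator hN).comp (T i).symm.measurable).pow_const p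
  have hcopy (i : ι) : ∫⁻ x, N.indicator ρ ((T i).symm x) ^ p ∂μ ≤ ∫⁻ x, ρ x ^ p ∂μ :=
    calc ∫⁻ x, N.indicator ρ ((T i).symm x) ^ p ∂μ
        = ∫⁻ x, N.indicator ρ x ^ p ∂μ :=
          ((hT i).symm (T i)).lintegral_comp ((hρ.indicator hN).pow_const p)
      _ ≤ ∫⁻ x, ρ x ^ p ∂μ :=
          lintegral_mono fun x => rpow_le_rpow (Set.indicator_le_self _ _ x) hp.le
  calc ∫⁻ x, unfoldDensity s T N ρ x ^ p ∂μ
      = (s.card : ℝ≥0∞) ^ (-p) * ∑ i ∈ s, ∫⁻ x, N.indicator ρ ((T i).symm x) ^ p ∂μ := by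
        rw [lintegral_congr_ae (unfoldDensity_rpow_ae_eq hp hdisj),
          lintegral_const_mul _ (Finset.measurable_fun_sum _ fun i _ => hmeas i),
          lintegral_finsetSum _ fun i _ => hmeas i]
    _ ≤ (s.card : ℝ≥0∞) ^ (-p) * ∑ _i ∈ s, ∫⁻ x, ρ x ^ p ∂μ := by
        gcongr _ * ?_
        exact Finset.sum_le_sum fun i _ => hcopy i
    _ = (s.card : ℝ≥0∞) ^ (1 - p) * ∫⁻ x, ρ x ^ p ∂μ := by
        rw [Finset.sum_const, nsmul_eq_mul, ← mul_assoc, sub_eq_neg_add,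
          rpow_add _ _ (by simpa using hs.ne_empty) (natCast_ne_top _), ENNReal.rpow_one]

end Folding

section Modulus

variable {n : ℕ} {ι : Type*} {s : Finset ι}
  {T : ι → EuclideanSpace ℝ (Fin n) ≃ᵐ EuclideanSpace ℝ (Fin n)}
  {N : Set (EuclideanSpace ℝ (Fin n))} {Γ : Set (Set (EuclideanSpace ℝ (Fin n)))}
  {ρ : EuclideanSpace ℝ (Fin n) → ℝ≥0∞} {p : ℝ}

/-- The curve family obtained from `Γ` by replacing every curve with the union of its images under
the maps `T i`, `i ∈ s`. -/
def symmetrizedFamily (s : Finset ι)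
    (T : ι → EuclideanSpace ℝ (Fin n) ≃ᵐ EuclideanSpace ℝ (Fin n))
    (Γ : Set (Set (EuclideanSpace ℝ (Fin n)))) : Set (Set (EuclideanSpace ℝ (Fin n))) :=
  {S | ∃ γ ∈ Γ, S = ⋃ i ∈ s, T i '' γ}

theorem pMod_le_of_admissible (h : Admissible n Γ ρ) : pMod n p Γ ≤ ∫⁻ x, ρ x ^ p :=
  iInf₂_le ρ h

theorem Admissible.foldDensity (hT : ∀ i, MeasurePreserving (T i) μH[1] μH[1])
    (hN : MeasurableSet N) (hΓ : ∀ γ ∈ Γ, γ ⊆ N)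
    (hρ : Admissible n (symmetrizedFamily s T Γ) ρ) :
    Admissible n Γ (foldDensity s T N ρ) :=
  ⟨measurable_foldDensity hN hρ.1, fun γ hγ => (hρ.2 _ ⟨γ, hγ, rfl⟩).trans
    (lintegral_biUnion_image_le_foldDensity hT hN (hΓ γ hγ) hρ.1)⟩

theorem Admissible.unfoldDensity (hs : s.Nonempty)
    (hT : ∀ i, MeasurePreserving (T i) μH[1] μH[1]) (hN : MeasurableSet N)
    (hΓ : ∀ γ ∈ Γ, γ ⊆ N) (hρ : Admissible n Γ ρ) :
    Admissible n (symmetrizedFamily s T Γ) (unfoldDensity s T N ρ) := by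
  refine ⟨measurable_unfoldDensity hN hρ.1, ?_⟩
  rintro _ ⟨γ, hγ, rfl⟩
  exact (hρ.2 γ hγ).trans (lintegral_le_biUnion_image_unfoldDensity hs hT hN (hΓ γ hγ) hρ.1)

theorem pMod_symmetrizedFamily_le (hp : 0 < p) (hs : s.Nonempty)
    (hvol : ∀ i, MeasurePreserving (T i)) (hlen : ∀ i, MeasurePreserving (T i) μH[1] μH[1])
    (hN : MeasurableSet N)
    (hdisj : (s : Set ι).Pairwise (Function.onFun (AEDisjoint volume) fun i => T i '' N))
    (hΓ : ∀ γ ∈ Γ, γ ⊆ N) :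
    pMod n p (symmetrizedFamily s T Γ) ≤ (s.card : ℝ≥0∞) ^ (1 - p) * pMod n p Γ := by
  have hcard : (s.card : ℝ≥0∞) ≠ 0 := by simpa using hs.ne_empty
  have hzero : (s.card : ℝ≥0∞) ^ (1 - p) ≠ 0 := by simp [rpow_eq_zero_iff, hcard]
  have htop : (s.card : ℝ≥0∞) ^ (1 - p) ≠ ∞ := rpow_ne_top_of_ne_zero hcard (natCast_ne_top _)
  have hmul : (s.card : ℝ≥0∞) ^ (1 - p) * pMod n p Γ =
      ⨅ ρ ∈ {ρ | Admissible n Γ ρ}, (s.card : ℝ≥0∞) ^ (1 - p) * ∫⁻ x, ρ x ^ p := by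
    simp only [pMod, mul_iInf_of_ne hzero htop]
  rw [hmul]
  exact le_iInf₂ fun ρ hρ => (pMod_le_of_admissible (hρ.unfoldDensity hs hlen hN hΓ)).trans
    (lintegral_unfoldDensity_rpow_le hp hs hvol hN hdisj hρ.1)

theorem le_pMod_symmetrizedFamily (hp : 1 ≤ p) (hs : s.Nonempty)
    (hvol : ∀ i, MeasurePreserving (T i)) (hlen : ∀ i, MeasurePreserving (T i) μH[1] μH[1])
    (hN : MeasurableSet N)
    (hdisj : (s : Set ι).Pairwise (Function.onFun (AEDisjoint volume) fun i => T i '' N))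
    (hΓ : ∀ γ ∈ Γ, γ ⊆ N) :
    (s.card : ℝ≥0∞) ^ (1 - p) * pMod n p Γ ≤ pMod n p (symmetrizedFamily s T Γ) := by
  refine le_iInf₂ fun ρ hρ => ?_
  calc (s.card : ℝ≥0∞) ^ (1 - p) * pMod n p Γ
      ≤ (s.card : ℝ≥0∞) ^ (1 - p) * ((s.card : ℝ≥0∞) ^ (p - 1) * ∫⁻ x, ρ x ^ p) := by
        gcongr
        exact (pMod_le_of_admissible (hρ.foldDensity hlen hN hΓ)).trans
          (lintegral_foldDensity_rpow_le hp hvol hN hdisj hρ.1)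
    _ = ∫⁻ x, ρ x ^ p := by
        rw [← mul_assoc, ← rpow_add _ _ (by simpa using hs.ne_empty) (natCast_ne_top _)]
        simp

theorem pMod_symmetrizedFamily (hp : 1 ≤ p) (hs : s.Nonempty)
    (hvol : ∀ i, MeasurePreserving (T i)) (hlen : ∀ i, MeasurePreserving (T i) μH[1] μH[1])
    (hN : MeasurableSet N)
    (hdisj : (s : Set ι).Pairwise (Function.onFun (AEDisjoint volume) fun i => T i '' N))
    (hΓ : ∀ γ ∈ Γ, γ ⊆ N) :
    pMod n p (symmetrizedFamily s T Γ) = (s.card : ℝ≥0∞) ^ (1 - p) * pMod n p Γ :=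
  (pMod_symmetrizedFamily_le (by linarith) hs hvol hlen hN hdisj hΓ).antisymm
    (le_pMod_symmetrizedFamily hp hs hvol hlen hN hdisj hΓ)

end Modulus

section Reflection

variable {n : ℕ}

theorem coordN_eq_apply (x : EuclideanSpace ℝ (Fin n)) (i : Fin n) : coordN n x i = x i := by
  simp [coordN, Fin.val_inj]

theorem continuous_coordN (k : ℕ) : Continuous fun x => coordN n x k := by
  unfold coordN
  refine continuous_finsetSum _ fun i _ => ?_
  split_ifs <;> fun_prop

/-- The unit vector `(-sin α, cos α, 0, …, 0)`, normal to the hyperplane that contains the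
half-hyperplane `θ = α`. -/
noncomputable def planeNormal (n : ℕ) (α : ℝ) : EuclideanSpace ℝ (Fin n) :=
  WithLp.toLp 2 fun i => if i.val = 0 then -sin α else if i.val = 1 then cos α else 0

theorem inner_planeNormal (α : ℝ) (x : EuclideanSpace ℝ (Fin n)) :
    inner ℝ (planeNormal n α) x = cos α * coordN n x 1 - sin α * coordN n x 0 := by
  simp only [planeNormal, coordN, PiLp.inner_apply, Finset.mul_sum, ← Finset.sum_sub_distrib]
  refine Finset.sum_congr rfl fun i _ => ?_
  rcases i with ⟨_ | _ | i, hi⟩ <;> simp [mul_comm]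

theorem norm_planeNormal (hn : 2 ≤ n) (α : ℝ) : ‖planeNormal n α‖ = 1 := by
  have h0 : coordN n (planeNormal n α) 0 = -sin α := by
    simpa [planeNormal] using coordN_eq_apply (planeNormal n α) ⟨0, by omega⟩
  have h1 : coordN n (planeNormal n α) 1 = cos α := by
    simpa [planeNormal] using coordN_eq_apply (planeNormal n α) ⟨1, by omega⟩
  rw [← sq_eq_sq₀ (norm_nonneg _) zero_le_one, ← real_inner_self_eq_norm_sq, inner_planeNormal,
    h0, h1]
  linear_combination sin_sq_add_cos_sq α

theorem planeRefl_apply (α : ℝ) (x : EuclideanSpace ℝ (Fin n)) (i : Fin n) :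
    planeRefl n α x i =
      if i.val = 0 then cos (2 * α) * coordN n x 0 + sin (2 * α) * coordN n x 1
      else if i.val = 1 then sin (2 * α) * coordN n x 0 - cos (2 * α) * coordN n x 1
      else x i :=
  rfl

theorem coordN_zero_planeRefl (hn : 1 ≤ n) (α : ℝ) (x : EuclideanSpace ℝ (Fin n)) :
    coordN n (planeRefl n α x) 0 = cos (2 * α) * coordN n x 0 + sin (2 * α) * coordN n x 1 :=
  coordN_eq_apply (planeRefl n α x) ⟨0, hn⟩

theorem coordN_one_planeRefl (hn : 2 ≤ n) (α : ℝ) (x : EuclideanSpace ℝ (Fin n)) :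
    coordN n (planeRefl n α x) 1 = sin (2 * α) * coordN n x 0 - cos (2 * α) * coordN n x 1 :=
  coordN_eq_apply (planeRefl n α x) ⟨1, hn⟩

theorem planeRefl_eq_reflection (hn : 2 ≤ n) (α : ℝ) :
    planeRefl n α = (ℝ ∙ planeNormal n α)ᗮ.reflection := by
  ext x i
  have hrefl : (ℝ ∙ planeNormal n α)ᗮ.reflection x i = x i -
      2 * (cos α * coordN n x 1 - sin α * coordN n x 0) * planeNormal n α i := by
    rw [Submodule.reflection_orthogonal_apply, Submodule.reflection_singleton_apply,
      inner_planeNormal, norm_planeNormal hn]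
    simp only [RCLike.ofReal_real_eq_id, id_eq, one_pow, div_one, PiLp.neg_apply, PiLp.sub_apply,
      PiLp.smul_apply, nsmul_eq_mul, smul_eq_mul]
    push_cast
    ring
  rw [hrefl, planeRefl_apply, planeNormal, cos_two_mul, sin_two_mul]
  have hx := coordN_eq_apply x i
  rcases i with ⟨_ | _ | i, hi⟩
  · simp only [↓reduceIte, ← hx]
    linear_combination 2 * coordN n x 0 * sin_sq_add_cos_sq α
  · simp only [zero_add, one_ne_zero, ↓reduceIte, ← hx]
    ring
  · simp

theorem planeRefl_mem_sector (hn : 2 ≤ n) (α : ℝ) {a b : ℝ} {x : EuclideanSpace ℝ (Fin n)}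
    (hx : x ∈ sector n a b) : planeRefl n α x ∈ sector n (2 * α - b) (2 * α - a) := by
  obtain ⟨r, θ, hr, ha, hb, h0, h1⟩ := hx
  refine ⟨r, 2 * α - θ, hr, by linarith, by linarith, ?_, ?_⟩
  · rw [coordN_zero_planeRefl (by omega), h0, h1, cos_sub]
    ring
  · rw [coordN_one_planeRefl hn, h0, h1, sin_sub]
    ring

/-- The composition `φ_k ∘ ⋯ ∘ φ_1` of the reflections `φ_j` in the hyperplanes containing
`θ = πj/m`, which carries `γ₀*` to `γ_k*`. -/
noncomputable def iteratedReflection (n m : ℕ) :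
    ℕ → EuclideanSpace ℝ (Fin n) ≃ₗᵢ[ℝ] EuclideanSpace ℝ (Fin n)
  | 0 => LinearIsometryEquiv.refl ℝ _
  | k + 1 => (iteratedReflection n m k).trans
      (ℝ ∙ planeNormal n (π * (k + 1) / m))ᗮ.reflection

theorem iteratedReflection_succ_apply (hn : 2 ≤ n) (m k : ℕ) (x : EuclideanSpace ℝ (Fin n)) :
    iteratedReflection n m (k + 1) x =
      planeRefl n (π * (k + 1) / m) (iteratedReflection n m k x) := by
  rw [planeRefl_eq_reflection hn]
  rfl

theorem reflImages_eq_image (hn : 2 ≤ n) (m : ℕ) (γ : Set (EuclideanSpace ℝ (Fin n))) (k : ℕ) :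
    reflImages n m γ k = iteratedReflection n m k '' γ := by
  induction k with
  | zero => simp [reflImages, iteratedReflection]
  | succ k ih =>
    simp only [reflImages, ih, Set.image_image, iteratedReflection_succ_apply hn]

theorem iteratedReflection_mem_sector (hn : 2 ≤ n) (m k : ℕ) {x : EuclideanSpace ℝ (Fin n)}
    (hx : x ∈ sector n 0 (π / m)) :
    iteratedReflection n m k x ∈ sector n (π * k / m) (π * (k + 1) / m) := by
  induction k with
  | zero => simpa [iteratedReflection] using hx
  | succ k ih =>
    rw [iteratedReflection_succ_apply hn]
    convert planeRefl_mem_sector hn (π * (k + 1) / m) ih using 1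
    push_cast
    congr 1 <;> ring

end Reflection

section Sector

variable {n : ℕ}

theorem measurableSet_sector (a b : ℝ) : MeasurableSet (sector n a b) := by
  let polar : ℝ × ℝ → ℝ × ℝ := fun q => (q.1 * cos q.2, q.1 * sin q.2)
  have hsigma : IsSigmaCompact (polar '' (Set.Ici 0 ×ˢ Set.Icc a b)) :=
    (isSigmaCompact_univ.of_isClosed_subset (isClosed_Ici.prod isClosed_Icc)
      (Set.subset_univ _)).image (by fun_prop)
  obtain ⟨K, hK, hKpolar⟩ := hsigma
  have hpolar : MeasurableSet (polar '' (Set.Ici 0 ×ˢ Set.Icc a b)) :=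
    hKpolar ▸ MeasurableSet.iUnion fun i => (hK i).measurableSet
  have hpreimage : sector n a b = (fun x => (coordN n x 0, coordN n x 1)) ⁻¹'
      (polar '' (Set.Ici 0 ×ˢ Set.Icc a b)) := by
    ext x
    simp [sector, polar, and_assoc, eq_comm]
  rw [hpreimage]
  exact ((continuous_coordN 0).prodMk (continuous_coordN 1)).measurable hpolar

theorem volume_orthogonal_planeNormal (hn : 2 ≤ n) (α : ℝ) :
    volume ((ℝ ∙ planeNormal n α)ᗮ : Set (EuclideanSpace ℝ (Fin n))) = 0 := by
  refine Measure.addHaar_submodule _ _ fun htop => ?_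
  have hzero : planeNormal n α = 0 := by simpa using htop
  simpa [hzero] using norm_planeNormal hn α

theorem sector_inter_sector_subset {a b c d : ℝ} (hbc : b ≤ c) (hda : d ≤ a + 2 * π) :
    sector n a b ∩ sector n c d ⊆
      ((ℝ ∙ planeNormal n a)ᗮ ∪ (ℝ ∙ planeNormal n c)ᗮ : Set (EuclideanSpace ℝ (Fin n))) := by
  rintro x ⟨⟨r, θ, hr, haθ, hθb, hx0, hx1⟩, ⟨t, η, ht, hcη, hηd, hx0', hx1'⟩⟩
  simp only [Set.mem_union, SetLike.mem_coe, Submodule.mem_orthogonal_singleton_iff_inner_right,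
    inner_planeNormal]
  have hrt : r = t := by
    rw [← sq_eq_sq₀ hr ht]
    calc r ^ 2 = coordN n x 0 ^ 2 + coordN n x 1 ^ 2 := by
          rw [hx0, hx1]
          linear_combination -r ^ 2 * sin_sq_add_cos_sq θ
      _ = t ^ 2 := by
          rw [hx0', hx1']
          linear_combination t ^ 2 * sin_sq_add_cos_sq η
  rcases hr.eq_or_lt with hr0 | hr0
  · left
    simp [hx0, hx1, ← hr0]
  have hcos : cos θ = cos η := mul_left_cancel₀ hr0.ne' (by rw [← hx0, hx0', hrt])
  have hsin : sin θ = sin η := mul_left_cancel₀ hr0.ne' (by rw [← hx1, hx1', hrt])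
  have hcos_sub : cos (η - θ) = 1 := by
    rw [cos_sub, hcos, hsin]
    linear_combination sin_sq_add_cos_sq η
  rcases (show η - θ ≤ 2 * π by linarith).eq_or_lt with hturn | hturn
  · left
    obtain rfl : θ = a := by linarith
    rw [hx0, hx1]
    ring
  · right
    have hsub : η - θ = 0 :=
      (cos_eq_one_iff_of_lt_of_lt (by linarith [pi_pos]) hturn).1 hcos_sub
    obtain rfl : θ = c := by linarith
    rw [hx0, hx1]
    ring

theorem aedisjoint_sector (hn : 2 ≤ n) {a b c d : ℝ} (hbc : b ≤ c) (hda : d ≤ a + 2 * π) :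
    AEDisjoint volume (sector n a b) (sector n c d) :=
  measure_mono_null (sector_inter_sector_subset hbc hda)
    (measure_union_null (volume_orthogonal_planeNormal hn a) (volume_orthogonal_planeNormal hn c))

theorem pairwise_aedisjoint_iteratedReflection_sector (hn : 2 ≤ n) (m : ℕ) :
    (Finset.range (2 * m) : Set ℕ).Pairwise (Function.onFun (AEDisjoint volume) fun k =>
      iteratedReflection n m k '' sector n 0 (π / m)) := by
  have hlt {j k : ℕ} (hjk : j < k) (hk : k < 2 * m) :
      AEDisjoint volume (iteratedReflection n m j '' sector n 0 (π / m))
        (iteratedReflection n m k '' sector n 0 (π / m)) := by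
    have hm : (0 : ℝ) < m := by exact_mod_cast (show 0 < m by omega)
    have hjk' : (j : ℝ) + 1 ≤ k := by exact_mod_cast hjk
    have hk' : (k : ℝ) + 1 ≤ 2 * m := by exact_mod_cast hk
    have hadjacent : π * (j + 1) / m ≤ π * k / m := by gcongr
    have hturn : π * (k + 1) / m ≤ π * j / m + 2 * π :=
      calc π * (k + 1) / m ≤ π * (2 * m) / m := by gcongr
        _ = 0 + 2 * π := by field_simp; ring
        _ ≤ π * j / m + 2 * π := by gcongr; positivity
    have himage (i : ℕ) : iteratedReflection n m i '' sector n 0 (π / m) ⊆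
        sector n (π * i / m) (π * (i + 1) / m) :=
      Set.image_subset_iff.2 fun _ => iteratedReflection_mem_sector hn m i
    exact (aedisjoint_sector hn hadjacent hturn).mono (himage j) (himage k)
  intro j hj k hk hjk
  rw [Finset.coe_range, Set.mem_Iio] at hj hk
  exact hjk.lt_or_gt.elim (fun h => hlt h hk) fun h => (hlt h hj).symm

end Sector

theorem pMod_reflection_general (n : ℕ) (hn : 2 ≤ n) (m : ℕ) (hm : 1 ≤ m) (p : ℝ) (hp : 1 ≤ p)
    (Γ₀ : Set (Set (EuclideanSpace ℝ (Fin n))))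
    (hΓ₀ : ∀ γ ∈ Γ₀, γ ⊆ sector n 0 (π / m)) :
    pMod n p {S | ∃ γ ∈ Γ₀, S = ⋃ k ∈ Finset.range (2 * m), reflImages n m γ k} =
      (2 * m : ℝ≥0∞) ^ (1 - p) * pMod n p Γ₀ := by
  have hsymm : {S | ∃ γ ∈ Γ₀, S = ⋃ k ∈ Finset.range (2 * m), reflImages n m γ k} =
      symmetrizedFamily (Finset.range (2 * m))
        (fun k => (iteratedReflection n m k).toMeasurableEquiv) Γ₀ := by
    simp only [symmetrizedFamily, reflImages_eq_image hn, LinearIsometryEquiv.coe_toMeasurableEquiv]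
  rw [hsymm, pMod_symmetrizedFamily hp (Finset.nonempty_range_iff.2 (by omega))
    (fun k => (iteratedReflection n m k).measurePreserving)
    (fun k => (iteratedReflection n m k).toIsometryEquiv.measurePreserving_hausdorffMeasure 1)
    (measurableSet_sector 0 (π / m)) (pairwise_aedisjoint_iteratedReflection_sector hn m) hΓ₀]
  simp

/-- Lemma 2: `M_p(Γ*) = (2m)^{1-p} M_p(Γ₀*)` for the family `Γ*` obtained by `2m`-fold
reflection of the curves of a family `Γ₀*` lying in the sector `N₀* = {0 ≤ θ ≤ π/m}`. -/
theorem pMod_reflection (n : ℕ) (hn : 2 ≤ n) (m : ℕ) (hm : 1 ≤ m) (p : ℝ) (hp : 1 < p)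
    (Γ₀ : Set (Set (EuclideanSpace ℝ (Fin n))))
    (hΓ₀ : ∀ γ ∈ Γ₀, γ ⊆ sector n 0 (Real.pi / m))
    (Γstar : Set (Set (EuclideanSpace ℝ (Fin n))))
    (hΓstar : Γstar = {S | ∃ γ ∈ Γ₀, S = ⋃ k ∈ Finset.range (2 * m), reflImages n m γ k}) :
    pMod n p Γstar = (2 * m : ℝ≥0∞) ^ ((1 : ℝ) - p) * pMod n p Γ₀ := by
  rw [hΓstar]
  exact pMod_reflection_general n hn m hm p hp.le Γ₀ hΓ₀
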